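/- arXiv:1502.03967 — 5 statements merged into one kernel-verified Lean document; each statement's English description precedes it below -/
import Mathlib

section
/- Let > be a semigroup order on the monomials of A = K[x₁,…,xₙ] whose local variables are exactly x_{j₁},…,x_{j_k}. Then > is a control order if and only if S := {1+g : g ∈ A, g = 0 or lt(g) < 1} equals {1+g : g ∈ ⟨x_{j₁},…,x_{j_k}⟩}. -/
open scoped Classical

noncomputable section

/-- A semigroup order on monomials: a strict total order on exponent vectors (written
additively; the monomial `1` corresponds to `0`) compatible with multiplication. -/
def IsSemigroupOrder {σ : Type*} (lt : (σ →₀ ℕ) → (σ →₀ ℕ) → Prop) : Prop :=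
  IsStrictTotalOrder (σ →₀ ℕ) lt ∧ ∀ a b c : σ →₀ ℕ, lt a b → lt (c + a) (c + b)

/-- The variable `i` is local for the order `lt`, i.e. `x_i < 1`. -/
def IsLocalVar {σ : Type*} (lt : (σ →₀ ℕ) → (σ →₀ ℕ) → Prop) (i : σ) : Prop :=
  lt (Finsupp.single i 1) 0

/-- A control order: a semigroup order under which every monomial divisible by a local
variable is `< 1`. -/
def IsControlOrder {σ : Type*} (lt : (σ →₀ ℕ) → (σ →₀ ℕ) → Prop) : Prop :=
  IsSemigroupOrder lt ∧ ∀ m : σ →₀ ℕ, (∃ i, IsLocalVar lt i ∧ m i ≠ 0) → lt m 0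

/-- `m` is the leading monomial of `g` w.r.t. `lt`. -/
def IsLeadingMonomial {K : Type*} [CommSemiring K] {σ : Type*}
    (lt : (σ →₀ ℕ) → (σ →₀ ℕ) → Prop) (g : MvPolynomial σ K) (m : σ →₀ ℕ) : Prop :=
  m ∈ g.support ∧ ∀ m' ∈ g.support, m' ≠ m → lt m' m

/-- The multiplicative set `S = {1 + g : g = 0 or lt(g) < 1}`. -/
def SDen (K : Type*) [CommSemiring K] {σ : Type*}
    (lt : (σ →₀ ℕ) → (σ →₀ ℕ) → Prop) : Set (MvPolynomial σ K) :=
  {f | ∃ g : MvPolynomial σ K, f = 1 + g ∧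
    (g = 0 ∨ ∃ m, IsLeadingMonomial lt g m ∧ lt m 0)}

/-- `I = ⋂ i ∈ s, Q i` is a minimal primary decomposition: every `Q i` is primary, the
radicals are pairwise distinct, and no component contains the intersection of the others. -/
def MinPrimDecOn {R : Type*} [CommRing R] {ι : Type*} (I : Ideal R) (Q : ι → Ideal R)
    (s : Finset ι) : Prop :=
  I = ⨅ i ∈ s, Q i ∧ (∀ i ∈ s, (Q i).IsPrimary) ∧
    (∀ i ∈ s, ∀ j ∈ s, (Q i).radical = (Q j).radical → i = j) ∧
    ∀ i ∈ s, ¬ (⨅ j ∈ s.erase i, Q j) ≤ Q i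

/-- The extraction determined by the decomposition `Q` (over `s`) and the ideal `J`:
the intersection of those components `Q i` with `Q i + J ≠ A` (which is `⊤` = the whole
ring when there are no such components). -/
def extractionFrom {R : Type*} [CommRing R] {ι : Type*} (J : Ideal R) (Q : ι → Ideal R)
    (s : Finset ι) : Ideal R :=
  ⨅ i ∈ s.filter (fun i => Q i ⊔ J ≠ ⊤), Q i

/-- `B` is the extraction `β(I,J)` of `I` by `J`. -/
def IsExtraction {R : Type*} [CommRing R] (I J B : Ideal R) : Prop :=
  ∃ (k : ℕ) (Q : Fin k → Ideal R), MinPrimDecOn I Q Finset.univ ∧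
    B = extractionFrom J Q Finset.univ

/-- `t ⊆ s` determines an isolated set of primes of the decomposition `Q` over `s`. -/
def IsIsolatedOn {R : Type*} [CommRing R] {ι : Type*} (Q : ι → Ideal R)
    (s t : Finset ι) : Prop :=
  t ⊆ s ∧ ∀ j ∈ s, (∃ i ∈ t, (Q j).radical ≤ (Q i).radical) → j ∈ t

/-- The lifted ideal `W' = ⟨W, t₁ - g₁, …, t_s - g_s⟩ ⊆ A' = K[x₁,…,xₙ,t₁,…,t_s]`. -/
def liftIdeal {K : Type*} [CommRing K] {n s : ℕ} (g : Fin s → MvPolynomial (Fin n) K)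
    (W : Ideal (MvPolynomial (Fin n) K)) : Ideal (MvPolynomial (Fin n ⊕ Fin s) K) :=
  W.map (MvPolynomial.rename (Sum.inl : Fin n → Fin n ⊕ Fin s)).toRingHom ⊔
    Ideal.span (Set.range fun w : Fin s =>
      (MvPolynomial.X (Sum.inr w) : MvPolynomial (Fin n ⊕ Fin s) K) -
        MvPolynomial.rename (Sum.inl : Fin n → Fin n ⊕ Fin s) (g w))

/-- The substitution homomorphism `φ : A' → A`, fixing each `x_i` and sending `t_w ↦ g_w`. -/
def substHom {K : Type*} [CommRing K] {n s : ℕ} (g : Fin s → MvPolynomial (Fin n) K) :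
    MvPolynomial (Fin n ⊕ Fin s) K →ₐ[K] MvPolynomial (Fin n) K :=
  MvPolynomial.aeval (Sum.elim MvPolynomial.X g)

/-!
The monomials `≥ 1` are closed under products, so every monomial `< 1` is divisible by a local
variable. Hence an order is a control order exactly when the monomials `< 1` are the ones divisible
by a local variable. The polynomials `g` with `g = 0` or `lt(g) < 1` are those all of whose
monomials are `< 1`, and the ideal generated by the local variables consists of the polynomials all
of whose monomials are divisible by one of them.
-/

namespace IsSemigroupOrder

variable {σ : Type*} {lt : (σ →₀ ℕ) → (σ →₀ ℕ) → Prop}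

theorem lt_zero_or_lt_zero_of_add_lt_zero (hsem : IsSemigroupOrder lt) {a b : σ →₀ ℕ}
    (hab : lt (a + b) 0) : lt a 0 ∨ lt b 0 := by
  obtain ⟨_, add_lt_add_left⟩ := hsem
  rcases trichotomous_of lt b 0 with hb | rfl | hb
  · exact .inr hb
  · exact .inl (by simpa only [add_zero] using hab)
  · have ha : lt a (a + b) := by simpa only [add_zero] using add_lt_add_left 0 b a hb
    exact .inl (_root_.trans ha hab)

theorem isLocalVar_of_single_lt_zero (hsem : IsSemigroupOrder lt) {i : σ} {k : ℕ}
    (hk : lt (Finsupp.single i k) 0) : IsLocalVar lt i := by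
  have := hsem.1
  induction k with
  | zero => exact absurd (by simpa only [Finsupp.single_zero] using hk) (irrefl_of lt 0)
  | succ k ih =>
    rw [Finsupp.single_add] at hk
    exact (hsem.lt_zero_or_lt_zero_of_add_lt_zero hk).elim ih id

theorem exists_isLocalVar_of_lt_zero (hsem : IsSemigroupOrder lt) {m : σ →₀ ℕ} (hm : lt m 0) :
    ∃ i, IsLocalVar lt i ∧ m i ≠ 0 := by
  have := hsem.1
  induction m using Finsupp.induction_linear with
  | zero => exact absurd hm (irrefl_of lt 0)
  | add a b iha ihb =>
    rcases hsem.lt_zero_or_lt_zero_of_add_lt_zero hm with ha | hb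
    · obtain ⟨i, hi, hai⟩ := iha ha
      exact ⟨i, hi, by simp [hai]⟩
    · obtain ⟨i, hi, hbi⟩ := ihb hb
      exact ⟨i, hi, by simp [hbi]⟩
  | single i k =>
    refine ⟨i, hsem.isLocalVar_of_single_lt_zero hm, fun hk => irrefl_of lt 0 ?_⟩
    rw [Finsupp.single_eq_same] at hk
    simpa only [hk, Finsupp.single_zero] using hm

end IsSemigroupOrder

theorem IsControlOrder.lt_zero_iff {σ : Type*} {lt : (σ →₀ ℕ) → (σ →₀ ℕ) → Prop}
    (hctl : IsControlOrder lt) {m : σ →₀ ℕ} : lt m 0 ↔ ∃ i, IsLocalVar lt i ∧ m i ≠ 0 :=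
  ⟨hctl.1.exists_isLocalVar_of_lt_zero, hctl.2 m⟩

theorem exists_forall_ne_rel_of_isStrictTotalOrder {α : Type*} (r : α → α → Prop)
    [IsStrictTotalOrder α r] {s : Finset α} (hs : s.Nonempty) :
    ∃ m ∈ s, ∀ m' ∈ s, m' ≠ m → r m' m := by
  let := linearOrderOfSTO r
  obtain ⟨m, hm, hmax⟩ := s.exists_max_image id hs
  exact ⟨m, hm, fun m' hm' hne => lt_of_le_of_ne (hmax m' hm') hne⟩

section LeadingMonomial

variable {R σ : Type*} [CommSemiring R] {lt : (σ →₀ ℕ) → (σ →₀ ℕ) → Prop}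
  [IsStrictTotalOrder (σ →₀ ℕ) lt]

theorem exists_isLeadingMonomial {g : MvPolynomial σ R} (hg : g ≠ 0) :
    ∃ m, IsLeadingMonomial lt g m :=
  exists_forall_ne_rel_of_isStrictTotalOrder lt (MvPolynomial.support_nonempty.mpr hg)

theorem eq_zero_or_isLeadingMonomial_lt_iff_forall_mem_support {g : MvPolynomial σ R} {b : σ →₀ ℕ} :
    (g = 0 ∨ ∃ m, IsLeadingMonomial lt g m ∧ lt m b) ↔ ∀ m ∈ g.support, lt m b := by
  constructor
  · rintro (rfl | ⟨m, ⟨-, hmax⟩, hmb⟩) m' hm'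
    · simp at hm'
    · obtain rfl | hne := eq_or_ne m' m
      · exact hmb
      · exact _root_.trans (hmax m' hm' hne) hmb
  · refine fun h => or_iff_not_imp_left.mpr fun hg => ?_
    obtain ⟨m, hm⟩ := exists_isLeadingMonomial (lt := lt) hg
    exact ⟨m, hm, h m hm.1⟩

theorem mem_SDen_iff {f : MvPolynomial σ R} :
    f ∈ SDen R lt ↔ ∃ g : MvPolynomial σ R, (∀ m ∈ g.support, lt m 0) ∧ f = 1 + g := by
  simp only [SDen, Set.mem_ofPred_eq, eq_zero_or_isLeadingMonomial_lt_iff_forall_mem_support,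
    and_comm]

theorem lt_zero_of_one_add_monomial_mem_SDen [Nontrivial R] {m : σ →₀ ℕ} (hm : m ≠ 0)
    (hS : 1 + MvPolynomial.monomial m (1 : R) ∈ SDen R lt) : lt m 0 := by
  obtain ⟨g, hg, heq⟩ := mem_SDen_iff.mp hS
  have hcoeff : 1 = g.coeff m := by
    simpa [MvPolynomial.coeff_one, hm.symm] using congrArg (MvPolynomial.coeff m) heq
  exact hg m (MvPolynomial.mem_support_iff.mpr (hcoeff ▸ one_ne_zero))

end LeadingMonomial

theorem monomial_mem_span_X_image {R σ : Type*} [CommSemiring R] {s : Set σ} {m : σ →₀ ℕ} {i : σ}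
    (hi : i ∈ s) (hmi : m i ≠ 0) (r : R) :
    MvPolynomial.monomial m r ∈ Ideal.span (MvPolynomial.X '' s) :=
  MvPolynomial.mem_ideal_span_X_image.mpr fun m' hm' => by
    obtain rfl := Finset.mem_singleton.mp (MvPolynomial.support_monomial_subset hm')
    exact ⟨i, hi, hmi⟩

theorem stmt_0_general {R σ : Type*} [CommSemiring R] [Nontrivial R]
    (lt : (σ →₀ ℕ) → (σ →₀ ℕ) → Prop) (hsem : IsSemigroupOrder lt)
    (loc : Set σ) (hloc : ∀ i, i ∈ loc ↔ IsLocalVar lt i) :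
    IsControlOrder lt ↔
      SDen R lt = {f : MvPolynomial σ R | ∃ g ∈ Ideal.span (MvPolynomial.X '' loc), f = 1 + g} := by
  have := hsem.1
  constructor
  · intro hctl
    ext f
    simp only [mem_SDen_iff, hctl.lt_zero_iff, Set.mem_ofPred_eq,
      MvPolynomial.mem_ideal_span_X_image, hloc]
  · refine fun hS => ⟨hsem, fun m ⟨i, hi, hmi⟩ => ?_⟩
    have hm : m ≠ 0 := fun h => hmi (by rw [h, Finsupp.zero_apply])
    refine lt_zero_of_one_add_monomial_mem_SDen (R := R) hm ?_
    rw [hS]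
    exact ⟨_, monomial_mem_span_X_image ((hloc i).mpr hi) hmi 1, rfl⟩

/-- a semigroup order with local variables exactly `loc` is a control order
iff `S = {1+g : g = 0 or lt(g) < 1}` equals `{1+g : g ∈ ⟨x_i : i ∈ loc⟩}`. -/
theorem stmt_0 {K : Type*} [Field K] {n : ℕ}
    (lt : (Fin n →₀ ℕ) → (Fin n →₀ ℕ) → Prop) (hsem : IsSemigroupOrder lt)
    (loc : Finset (Fin n)) (hloc : ∀ i, i ∈ loc ↔ IsLocalVar lt i) :
    IsControlOrder lt ↔
      SDen K lt =
        {f : MvPolynomial (Fin n) K |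
          ∃ g ∈ Ideal.span ((fun i => (MvPolynomial.X i : MvPolynomial (Fin n) K)) ''
            (loc : Set (Fin n))), f = 1 + g} :=
  stmt_0_general lt hsem loc hloc
end
end

section
/- If I' = Q̃₁ ∩ … ∩ Q̃_k is a minimal primary decomposition of I' in A', then I = φ(Q̃₁) ∩ … ∩ φ(Q̃_k), each φ(Q̃_i) is a primary ideal of A, and this expression is a minimal primary decomposition of I in A. -/
open scoped Classical

noncomputable section

/-!
The map `φ : A' → A` is a retraction of the inclusion `A ⊆ A'`, and its kernel is generated by the
`t_w - g_w`: modulo these, every polynomial of `A'` is congruent to its own substitution. So `φ` is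
surjective, `ker φ ≤ I'` and `φ(I') = I`. Extension and contraction along a surjection are inverse
bijections between the ideals containing the kernel and all ideals of the target, and they respect
intersections, radicals and primariness, hence minimal primary decompositions.
-/

section Surjective

variable {R S F : Type*} [FunLike F R S] {f : F}

theorem isPrimary_comap_iff_of_surjective [CommSemiring R] [CommSemiring S] [RingHomClass F R S]
    (hf : Function.Surjective f) {I : Ideal S} : (I.comap f).IsPrimary ↔ I.IsPrimary := by
  simp only [Ideal.isPrimary_iff, ne_eq, Ideal.comap_eq_top_iff, Ideal.mem_comap,
    ← Ideal.comap_radical, map_mul, hf.forall]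

theorem comap_map_eq_self_of_ker_le [Ring R] [Ring S] [RingHomClass F R S]
    (hf : Function.Surjective f) {I : Ideal R} (hI : RingHom.ker f ≤ I) :
    (I.map f).comap f = I :=
  (Ideal.comap_map_of_surjective' f hf I).trans (sup_eq_left.mpr hI)

variable [CommRing R] [CommRing S] [RingHomClass F R S] {ι : Type*} {s : Finset ι}

theorem minPrimDecOn_congr {I : Ideal R} {Q Q' : ι → Ideal R} (h : ∀ i ∈ s, Q i = Q' i) :
    MinPrimDecOn I Q s ↔ MinPrimDecOn I Q' s := by
  have iInf_erase (i : ι) : ⨅ j ∈ s.erase i, Q j = ⨅ j ∈ s.erase i, Q' j :=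
    biInf_congr fun j hj => h j (Finset.mem_of_mem_erase hj)
  simp +contextual only [MinPrimDecOn, iInf_erase, h]

theorem minPrimDecOn_comap_iff_of_surjective (hf : Function.Surjective f) {I : Ideal S}
    {P : ι → Ideal S} :
    MinPrimDecOn (I.comap f) (fun i => (P i).comap f) s ↔ MinPrimDecOn I P s := by
  simp only [MinPrimDecOn, ← Ideal.comap_iInf, ← Ideal.comap_radical,
    isPrimary_comap_iff_of_surjective hf, (Ideal.comap_injective_of_surjective f hf).eq_iff,
    Ideal.comap_le_comap_iff_of_surjective f hf]

theorem MinPrimDecOn.map_of_surjective {I : Ideal R} {Q : ι → Ideal R} (h : MinPrimDecOn I Q s)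
    (hf : Function.Surjective f) (hI : RingHom.ker f ≤ I) :
    MinPrimDecOn (I.map f) (fun i => (Q i).map f) s := by
  have comap_map_component (i : ι) (hi : i ∈ s) : ((Q i).map f).comap f = Q i :=
    comap_map_eq_self_of_ker_le hf (hI.trans (h.1.trans_le (iInf₂_le i hi)))
  rwa [← minPrimDecOn_comap_iff_of_surjective hf, comap_map_eq_self_of_ker_le hf hI,
    minPrimDecOn_congr comap_map_component]

end Surjective

section Substitution

open MvPolynomial

variable {K σ τ : Type*} [CommRing K]

theorem aeval_sumElim_X_rename_inl (g : τ → MvPolynomial σ K) (p : MvPolynomial σ K) :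
    aeval (Sum.elim X g) (rename Sum.inl p) = p := by
  rw [aeval_rename, Sum.elim_comp_inl, aeval_X_left_apply]

theorem ker_aeval_sumElim_X (g : τ → MvPolynomial σ K) :
    RingHom.ker (aeval (R := K) (Sum.elim X g)) =
      Ideal.span (Set.range fun w => X (Sum.inr w) - rename Sum.inl (g w)) := by
  set L : Ideal (MvPolynomial (σ ⊕ τ) K) :=
    Ideal.span (Set.range fun w => X (Sum.inr w) - rename Sum.inl (g w)) with hL
  apply le_antisymm
  · have mk_eq_mk_comp : Ideal.Quotient.mkₐ K L =
        (Ideal.Quotient.mkₐ K L).comp ((rename Sum.inl).comp (aeval (Sum.elim X g))) := by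
      ext (i | w)
      · simp
      · simp only [AlgHom.comp_apply, aeval_X, Sum.elim_inr, Ideal.Quotient.mkₐ_eq_mk,
          Ideal.Quotient.eq]
        exact Ideal.subset_span (Set.mem_range_self w)
    intro p hp
    have mk_eq_zero : Ideal.Quotient.mkₐ K L p = 0 := by
      rw [mk_eq_mk_comp, AlgHom.comp_apply, AlgHom.comp_apply, RingHom.mem_ker.mp hp, map_zero,
        map_zero]
    exact Ideal.Quotient.eq_zero_iff_mem.mp mk_eq_zero
  · rw [hL, Ideal.span_le, Set.range_subset_iff]
    intro w
    rw [SetLike.mem_coe, RingHom.mem_ker, map_sub, aeval_sumElim_X_rename_inl, aeval_X,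
      Sum.elim_inr, sub_self]

variable {n s : ℕ} (g : Fin s → MvPolynomial (Fin n) K) (I : Ideal (MvPolynomial (Fin n) K))

theorem substHom_surjective : Function.Surjective (substHom g) :=
  fun p => ⟨_, aeval_sumElim_X_rename_inl g p⟩

theorem liftIdeal_eq_map_sup_ker_substHom :
    liftIdeal g I = I.map (rename Sum.inl).toRingHom ⊔ RingHom.ker (substHom g) := by
  rw [liftIdeal, substHom, ker_aeval_sumElim_X]

theorem map_substHom_liftIdeal : (liftIdeal g I).map (substHom g) = I := by
  have comp_eq_id : (RingHomClass.toRingHom (substHom g)).comp (rename Sum.inl).toRingHom =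
      RingHom.id (MvPolynomial (Fin n) K) :=
    RingHom.ext (aeval_sumElim_X_rename_inl g)
  have map_map_rename : (I.map (rename Sum.inl).toRingHom).map (substHom g) = I := by
    rw [← Ideal.map_coe (substHom g), Ideal.map_map, comp_eq_id, Ideal.map_id]
  have map_ker : (RingHom.ker (substHom g)).map (substHom g) = ⊥ :=
    (Ideal.map_eq_bot_iff_le_ker _).mpr le_rfl
  rw [liftIdeal_eq_map_sup_ker_substHom, Ideal.map_sup, map_map_rename, map_ker, sup_bot_eq]

end Substitution

theorem stmt_3_general {K : Type*} [CommRing K] {n s : ℕ} (g : Fin s → MvPolynomial (Fin n) K)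
    (I : Ideal (MvPolynomial (Fin n) K)) {ι : Type*} (t : Finset ι)
    (Qt : ι → Ideal (MvPolynomial (Fin n ⊕ Fin s) K)) (hdec : MinPrimDecOn (liftIdeal g I) Qt t) :
    MinPrimDecOn I (fun i => (Qt i).map (substHom g)) t := by
  have ker_le : RingHom.ker (substHom g) ≤ liftIdeal g I :=
    le_sup_right.trans_eq (liftIdeal_eq_map_sup_ker_substHom g I).symm
  simpa only [map_substHom_liftIdeal] using
    hdec.map_of_surjective (substHom_surjective g) ker_le

/-- if `I' = ⋂ Q̃ i` is a minimal primary decomposition of the lifted ideal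
`I' = ⟨I, t₁-g₁,…,t_s-g_s⟩` in `A'`, then `I = ⋂ φ(Q̃ i)` and this is a minimal primary
decomposition of `I` in `A` (in particular each `φ(Q̃ i)` is primary). -/
theorem stmt_3 {K : Type*} [Field K] {n s : ℕ}
    (g : Fin s → MvPolynomial (Fin n) K) (I : Ideal (MvPolynomial (Fin n) K))
    (k : ℕ) (Qt : Fin k → Ideal (MvPolynomial (Fin n ⊕ Fin s) K))
    (hdec : MinPrimDecOn (liftIdeal g I) Qt Finset.univ) :
    MinPrimDecOn I (fun i => (Qt i).map (substHom g)) Finset.univ :=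
  stmt_3_general g I Finset.univ Qt hdec
end
end

section
/- Let I and J be ideals of A = K[x₁,…,xₙ], and let I = Q₁ ∩ … ∩ Q_k and I = M₁ ∩ … ∩ M_l be two minimal primary decompositions of I. Then ∩{Q_i : Q_i + J ≠ A} = ∩{M_j : M_j + J ≠ A}, where an empty intersection is interpreted as A. In other words, the extraction β(I,J) is well defined, independent of the chosen minimal primary decomposition. -/
open scoped Classical

noncomputable section

/-!
The extraction of `I` by `J` is the contraction to `R` of the extension of `I` to `(1 + J)⁻¹R`,
which does not mention a decomposition. Indeed, extension to a localization `S⁻¹R` followed by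
contraction commutes with finite intersections, fixes the primary ideals disjoint from `S` and sends
the others to `R`, while `Q` is disjoint from `1 + J` exactly when `Q + J ≠ R`.
-/

section

variable {R : Type*} [CommRing R] {ι : Type*}

/-- The multiplicative set `1 + J`, encoded as the preimage of `1` under `R → R ⧸ J`. -/
def oneAddSubmonoid (J : Ideal R) : Submonoid R :=
  MonoidHom.mker (Ideal.Quotient.mk J)

theorem mem_oneAddSubmonoid_iff {J : Ideal R} {u : R} : u ∈ oneAddSubmonoid J ↔ 1 - u ∈ J := by
  rw [oneAddSubmonoid, MonoidHom.mem_mker, ← map_one (Ideal.Quotient.mk J), eq_comm,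
    Ideal.Quotient.mk_eq_mk_iff_sub_mem]

theorem disjoint_oneAddSubmonoid_iff {J Q : Ideal R} :
    Disjoint (oneAddSubmonoid J : Set R) Q ↔ Q ⊔ J ≠ ⊤ := by
  rw [Ne, ← not_iff_not, not_not, Set.not_disjoint_iff, ← Ideal.isCoprime_iff_sup_eq,
    Ideal.isCoprime_iff_exists]
  simp only [SetLike.mem_coe, mem_oneAddSubmonoid_iff]
  constructor
  · rintro ⟨u, hJ, hQ⟩
    exact ⟨u, hQ, 1 - u, hJ, add_sub_cancel u 1⟩
  · rintro ⟨u, hQ, v, hJ, huv⟩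
    exact ⟨u, eq_sub_of_add_eq' huv ▸ hJ, hQ⟩

section Localization

variable (S : Submonoid R) (A : Type*) [CommRing A] [Algebra R A]

theorem under_map_biInf [IsLocalization S A] (Q : ι → Ideal R) (s : Finset ι) :
    ((⨅ i ∈ s, Q i).map (algebraMap R A)).under R =
      ⨅ i ∈ s, ((Q i).map (algebraMap R A)).under R := by
  simp only [← Finset.inf_eq_iInf, ← IsLocalization.mapFrameHom_apply S A, map_finset_inf,
    Ideal.under, Ideal.comap_finsetInf, Function.comp_def]

variable [IsLocalization S A]

theorem under_map_eq_top_of_not_disjoint {I : Ideal R} (h : ¬ Disjoint (S : Set R) I) :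
    (I.map (algebraMap R A)).under R = ⊤ := by
  rw [← IsLocalization.map_algebraMap_ne_top_iff_disjoint S A, not_not] at h
  rw [h, Ideal.under_top]

theorem under_map_biInf_eq_of_isPrimary {Q : ι → Ideal R} {s : Finset ι}
    (hQ : ∀ i ∈ s, (Q i).IsPrimary) :
    ((⨅ i ∈ s, Q i).map (algebraMap R A)).under R =
      ⨅ i ∈ s.filter (fun i => Disjoint (S : Set R) (Q i)), Q i := by
  have under_map (i : ι) (hi : i ∈ s) : ((Q i).map (algebraMap R A)).under R =
      if Disjoint (S : Set R) (Q i) then Q i else ⊤ := by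
    split_ifs with h
    · exact IsLocalization.under_map_of_isPrimary_disjoint S A (hQ i hi) h
    · exact under_map_eq_top_of_not_disjoint S A h
  rw [under_map_biInf S A, ← Finset.inf_eq_iInf, Finset.inf_congr rfl under_map, Finset.inf_ite,
    Finset.inf_top, inf_top_eq, Finset.inf_eq_iInf]

end Localization

theorem extractionFrom_eq_under_map (J : Ideal R) {Q : ι → Ideal R} {s : Finset ι}
    (hQ : ∀ i ∈ s, (Q i).IsPrimary) :
    extractionFrom J Q s = ((⨅ i ∈ s, Q i).map
      (algebraMap R (Localization (oneAddSubmonoid J)))).under R := by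
  simp only [under_map_biInf_eq_of_isPrimary (oneAddSubmonoid J) _ hQ,
    disjoint_oneAddSubmonoid_iff, extractionFrom]

theorem stmt_4_general {κ : Type*} (J : Ideal R) {Q : ι → Ideal R} {M : κ → Ideal R}
    {s : Finset ι} {t : Finset κ} (hQ : ∀ i ∈ s, (Q i).IsPrimary)
    (hM : ∀ j ∈ t, (M j).IsPrimary) (hQM : ⨅ i ∈ s, Q i = ⨅ j ∈ t, M j) :
    extractionFrom J Q s = extractionFrom J M t := by
  rw [extractionFrom_eq_under_map J hQ, extractionFrom_eq_under_map J hM, hQM]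

end

/-- the extraction `β(I,J)` is well defined: any two minimal primary
decompositions of `I` give the same value. -/
theorem stmt_4 {K : Type*} [Field K] {n : ℕ}
    (I J : Ideal (MvPolynomial (Fin n) K))
    (k l : ℕ) (Q : Fin k → Ideal (MvPolynomial (Fin n) K))
    (M : Fin l → Ideal (MvPolynomial (Fin n) K))
    (hQ : MinPrimDecOn I Q Finset.univ) (hM : MinPrimDecOn I M Finset.univ) :
    extractionFrom J Q Finset.univ = extractionFrom J M Finset.univ := by
  exact stmt_4_general J hQ.2.1 hM.2.1 (hQ.1.symm.trans hM.1)
end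
end

section
/- Let I = Q₁ ∩ … ∩ Q_k be a minimal primary decomposition of a proper ideal I of A = K[x₁,…,xₙ]. For every isolated set {√Q_{i₁},…,√Q_{i_m}} of prime ideals of I there exists an ideal J ⊆ A such that β(I,J) = Q_{i₁} ∩ … ∩ Q_{i_m}. Consequently, {β(I,J) : J an ideal of A} = {Q_{i₁} ∩ … ∩ Q_{i_m} : {√Q_{i₁},…,√Q_{i_m}} is an isolated set of primes of I}. -/
open scoped Classical

noncomputable section

/-!
Whether `Q + J` is the whole ring depends on `Q` only through its radical, and `Q + J ≠ A` is
inherited by smaller radicals; hence every extraction is taken over an isolated set of primes.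
Conversely, a prime `√Qᵢ` of an isolated set contains no component outside the set, hence not their
intersection; as `A` is a Jacobson ring, `√Qᵢ` lies in a maximal ideal `Mᵢ` that does not contain
this intersection either. For `J = ⋂ Mᵢ`, a component `Q` satisfies `Q + J ≠ A` exactly when it lies
in some `Mᵢ`, that is, when it belongs to the set.
-/

section

variable {R ι : Type*} [CommRing R]

theorem radical_sup_eq_top_iff {I J : Ideal R} : I.radical ⊔ J = ⊤ ↔ I ⊔ J = ⊤ := by
  rw [← Ideal.radical_eq_top, Ideal.radical_sup, Ideal.radical_idem, ← Ideal.radical_sup,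
    Ideal.radical_eq_top]

theorem isIsolatedOn_filter_sup_ne_top (J : Ideal R) (Q : ι → Ideal R) (s : Finset ι) :
    IsIsolatedOn Q s (s.filter fun i => Q i ⊔ J ≠ ⊤) := by
  refine ⟨Finset.filter_subset _ _, ?_⟩
  rintro j hj ⟨i, hi, hji⟩
  refine Finset.mem_filter.mpr ⟨hj, fun hj_top => (Finset.mem_filter.mp hi).2 ?_⟩
  rw [← radical_sup_eq_top_iff] at hj_top ⊢
  exact eq_top_mono (sup_le_sup_right hji J) hj_top

theorem sup_iInf_ne_top_iff_exists_le {I : Ideal R} {M : ι → Ideal R} {t : Finset ι}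
    (hM : ∀ i ∈ t, (M i).IsMaximal) :
    I ⊔ ⨅ i ∈ t, M i ≠ ⊤ ↔ ∃ i ∈ t, I ≤ M i := by
  constructor
  · contrapose!
    exact fun hI => Ideal.sup_iInf_eq_top fun i hi =>
      ((hM i hi).out.not_le_iff_codisjoint.mp (hI i hi)).symm.eq_top
  · rintro ⟨i, hi, hIi⟩
    exact ne_top_of_le_ne_top (hM i hi).ne_top (sup_le hIi (iInf₂_le i hi))

section Jacobson

variable [IsJacobsonRing R]

theorem exists_isMaximal_not_le_of_not_le_radical {I J : Ideal R} (h : ¬ J ≤ I.radical) :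
    ∃ M : Ideal R, M.IsMaximal ∧ I ≤ M ∧ ¬ J ≤ M := by
  contrapose! h
  rw [Ideal.radical_eq_jacobson]
  exact le_sInf fun M ⟨hIM, hM⟩ => h M hM hIM

theorem exists_isMaximal_forall_not_le_of_isPrime_radical {I : Ideal R} (hI : I.radical.IsPrime)
    {Q : ι → Ideal R} {u : Finset ι} (hQ : ∀ j ∈ u, ¬ Q j ≤ I.radical) :
    ∃ M : Ideal R, M.IsMaximal ∧ I ≤ M ∧ ∀ j ∈ u, ¬ Q j ≤ M := by
  have h_inf : ¬ u.inf Q ≤ I.radical := by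
    rw [hI.inf_le']
    push Not
    exact hQ
  obtain ⟨M, hM, hIM, h_not_le⟩ := exists_isMaximal_not_le_of_not_le_radical h_inf
  exact ⟨M, hM, hIM, fun j hj hjM => h_not_le ((Finset.inf_le hj).trans hjM)⟩

theorem IsIsolatedOn.exists_filter_sup_ne_top_eq {Q : ι → Ideal R} {s t : Finset ι}
    (ht : IsIsolatedOn Q s t) (hQ : ∀ i ∈ t, (Q i).radical.IsPrime) :
    ∃ J : Ideal R, (s.filter fun i => Q i ⊔ J ≠ ⊤) = t := by
  obtain ⟨ht_sub, ht_closed⟩ := ht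
  have h_avoid : ∀ i ∈ t, ∃ M : Ideal R, M.IsMaximal ∧ Q i ≤ M ∧ ∀ j ∈ s \ t, ¬ Q j ≤ M := by
    refine fun i hi => exists_isMaximal_forall_not_le_of_isPrime_radical (hQ i hi) ?_
    intro j hj hji
    obtain ⟨hjs, hjt⟩ := Finset.mem_sdiff.mp hj
    exact hjt (ht_closed j hjs ⟨i, hi, (hQ i hi).radical_le_iff.mpr hji⟩)
  choose! M hM_max hM_le hM_avoid using h_avoid
  refine ⟨⨅ i ∈ t, M i, ?_⟩
  ext j
  rw [Finset.mem_filter, sup_iInf_ne_top_iff_exists_le hM_max]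
  constructor
  · rintro ⟨hjs, i, hi, hji⟩
    by_contra hjt
    exact hM_avoid i hi j (Finset.mem_sdiff.mpr ⟨hjs, hjt⟩) hji
  · exact fun hj => ⟨ht_sub hj, j, hj, hM_le j hj⟩

theorem stmt_6_general (Q : ι → Ideal R) (s : Finset ι)
    (hQ : ∀ i ∈ s, (Q i).radical.IsPrime) :
    (∀ t : Finset ι, IsIsolatedOn Q s t →
        ∃ J : Ideal R, extractionFrom J Q s = ⨅ i ∈ t, Q i) ∧
      {B : Ideal R | ∃ J : Ideal R, B = extractionFrom J Q s} =
        {B : Ideal R | ∃ t : Finset ι, IsIsolatedOn Q s t ∧ B = ⨅ i ∈ t, Q i} := by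
  have isolated_is_extraction : ∀ t : Finset ι, IsIsolatedOn Q s t →
      ∃ J : Ideal R, extractionFrom J Q s = ⨅ i ∈ t, Q i := by
    intro t ht
    obtain ⟨J, hJ⟩ := ht.exists_filter_sup_ne_top_eq fun i hi => hQ i (ht.1 hi)
    exact ⟨J, by rw [extractionFrom, hJ]⟩
  refine ⟨isolated_is_extraction, Set.Subset.antisymm ?_ ?_⟩
  · rintro _ ⟨J, rfl⟩
    exact ⟨_, isIsolatedOn_filter_sup_ne_top J Q s, rfl⟩
  · rintro _ ⟨t, ht, rfl⟩
    obtain ⟨J, hJ⟩ := isolated_is_extraction t ht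
    exact ⟨J, hJ.symm⟩

end Jacobson

end

/-- every intersection of components over an isolated set of primes of `I`
is an extraction `β(I,J)` for some `J`; and the set of extractions of `I` is exactly the
set of such intersections. -/
theorem stmt_6 {K : Type*} [Field K] {n : ℕ}
    (I : Ideal (MvPolynomial (Fin n) K)) (hI : I ≠ ⊤)
    (k : ℕ) (Q : Fin k → Ideal (MvPolynomial (Fin n) K))
    (hQ : MinPrimDecOn I Q Finset.univ) :
    (∀ t : Finset (Fin k), IsIsolatedOn Q Finset.univ t →
        ∃ J : Ideal (MvPolynomial (Fin n) K),
          extractionFrom J Q Finset.univ = ⨅ i ∈ t, Q i) ∧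
      {B : Ideal (MvPolynomial (Fin n) K) |
          ∃ J : Ideal (MvPolynomial (Fin n) K), B = extractionFrom J Q Finset.univ} =
        {B : Ideal (MvPolynomial (Fin n) K) |
          ∃ t : Finset (Fin k), IsIsolatedOn Q Finset.univ t ∧ B = ⨅ i ∈ t, Q i} := by
  exact stmt_6_general Q Finset.univ fun i hi => Ideal.isPrime_radical (hQ.2.1 i hi)
end
end

section
/- Let > be a semigroup order on the monomials of A = K[x₁,…,xₙ] with multiplicative set S := {1+g : g = 0 or lt(g) < 1}. Then the Krull dimensions satisfy dim(S⁻¹A / S⁻¹I) = dim(A / (S⁻¹I)^c) for every ideal I ⊆ A if and only if > is a control order. -/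
open scoped Classical

noncomputable section

/-!
Both sides of the equation are dimensions of `A / J` and of its localization at the image of `S`,
where `J = (S⁻¹I)ᶜ`.

If `>` is a control order, then `S = 1 + 𝔞` with `𝔞` the ideal generated by the local variables,
so every prime disjoint from `S` lies in a maximal ideal `M` disjoint from `S`. Finitely generated
domains over a field have the same height at all their maximal ideals, hence such an `M` already
realizes the dimension of each irreducible component of `A / J`, and `M` survives in `S⁻¹A`.

If `>` is not a control order, there is a monomial `m > 1` divisible by a local variable `xᵢ`.
Take `I = ⟨1 - m⟩`. Leading monomials show that `I` does not meet `S`. A maximal ideal `M ⊇ I` does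
not contain `xᵢ`, so by the Nullstellensatz it contains some `1 - xᵢ q(xᵢ) ∈ S`. Therefore no
maximal ideal of `A / J` survives in the localization, and the dimension drops.
-/

section Height

theorem finiteRingKrullDim_of_lt_top {R : Type*} [CommRing R] [Nontrivial R]
    (h : ringKrullDim R < ⊤) : FiniteRingKrullDim R :=
  finiteRingKrullDim_iff_ne_bot_and_top.2
    ⟨((WithBot.bot_lt_coe 0).trans_le ringKrullDim_nonneg_of_nontrivial).ne', h.ne⟩

theorem height_le_height_comap_of_surjective {R R' : Type*} [CommRing R] [CommRing R']
    {f : R →+* R'} (hf : Function.Surjective f) (P : Ideal R') [hP : P.IsPrime] :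
    P.height ≤ (P.comap f).height := by
  let p : PrimeSpectrum R' := ⟨P, hP⟩
  calc P.height = Order.height p := p.height_eq_orderHeight
    _ ≤ Order.height (PrimeSpectrum.comap f p) :=
      Order.height_le_height_apply_of_strictMono _
        (RingHom.strictMono_comap_of_surjective hf) p
    _ = (P.comap f).height := (PrimeSpectrum.comap f p).height_eq_orderHeight.symm

theorem ringKrullDim_le_of_forall_minimalPrimes {R : Type*} [CommRing R] {d : WithBot ℕ∞}
    (h : ∀ P ∈ minimalPrimes R, ringKrullDim (R ⧸ P) ≤ d) : ringKrullDim R ≤ d := by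
  rw [ringKrullDim, Order.krullDim_eq_iSup_coheight]
  refine iSup_le fun p ↦ ?_
  obtain ⟨P, hP, hPp⟩ := Ideal.exists_minimalPrimes_le (bot_le : ⊥ ≤ p.asIdeal)
  let q : PrimeSpectrum R := ⟨P, hP.isPrime⟩
  calc (Order.coheight p : WithBot ℕ∞) ≤ Order.coheight q := by
        exact_mod_cast Order.coheight_anti (show q ≤ p from hPp)
    _ = Order.krullDim (Set.Ici q) := Order.coheight_eq_krullDim_Ici q
    _ = ringKrullDim (R ⧸ P) := (ringKrullDim_quotient P).symm
    _ ≤ d := h P hP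

theorem ringKrullDim_le_of_isIntegral (R R' : Type*) [CommRing R] [CommRing R'] [Algebra R R']
    [Algebra.IsIntegral R R'] : ringKrullDim R' ≤ ringKrullDim R :=
  Order.krullDim_le_of_strictMono (PrimeSpectrum.comap (algebraMap R R'))
    fun _ _ h ↦ Ideal.IsIntegral.comap_lt_comap h

variable (K : Type*) [Field K]

theorem height_eq_of_isMaximal_mvPolynomial (n : ℕ) (M : Ideal (MvPolynomial (Fin n) K))
    [hM : M.IsMaximal] : M.height = n := by
  induction n with
  | zero =>
    have hdim : (M.height : WithBot ℕ∞) ≤ ringKrullDim (MvPolynomial (Fin 0) K) :=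
      Ideal.height_le_ringKrullDim_of_isPrime
    have hzero : ringKrullDim (MvPolynomial (Fin 0) K) = 0 := by simp
    simpa using hdim.trans_eq hzero
  | succ n ih =>
    let e := (MvPolynomial.finSuccEquiv K n).toRingEquiv
    let P : Ideal (Polynomial (MvPolynomial (Fin n) K)) := M.map e
    have : P.IsMaximal := Ideal.map_isMaximal_of_equiv e
    have : (P.under (MvPolynomial (Fin n) K)).IsMaximal :=
      Polynomial.isMaximal_comap_C_of_isJacobsonRing P
    have : P.LiesOver (P.under (MvPolynomial (Fin n) K)) := ⟨rfl⟩
    calc M.height = P.height := (e.height_map M).symm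
      _ = (P.under (MvPolynomial (Fin n) K)).height + 1 := Polynomial.height_eq_height_add_one _ P
      _ = (n + 1 : ℕ) := by rw [ih, Nat.cast_succ]

theorem height_eq_ringKrullDim_of_isMaximal {D : Type*} [CommRing D] [IsDomain D] [Algebra K D]
    [Algebra.FiniteType K D] (N : Ideal D) [N.IsMaximal] : N.height = ringKrullDim D := by
  refine le_antisymm Ideal.height_le_ringKrullDim_of_isPrime ?_
  obtain ⟨s, g, g_injective, g_integral⟩ := exists_integral_inj_algHom_of_fg K D
  algebraize [g.toRingHom]
  have : FaithfulSMul (MvPolynomial (Fin s) K) D :=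
    (faithfulSMul_iff_algebraMap_injective _ _).2 g_injective
  have : IsNoetherianRing D := Algebra.FiniteType.isNoetherianRing K D
  let M := N.under (MvPolynomial (Fin s) K)
  have : M.IsMaximal := Ideal.isMaximal_comap_of_isIntegral_of_isMaximal N
  have s_le_height : (s : ℕ∞) ≤ N.height := by
    rw [Ideal.height_eq_height_add_of_liesOver_of_hasGoingDown M N,
      height_eq_of_isMaximal_mvPolynomial K s M]
    exact le_self_add
  calc ringKrullDim D ≤ ringKrullDim (MvPolynomial (Fin s) K) := ringKrullDim_le_of_isIntegral _ _
    _ = s := by simp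
    _ ≤ N.height := by exact_mod_cast s_le_height

theorem ringKrullDim_quotient_le_height_of_isMaximal {R : Type*} [CommRing R] [Algebra K R]
    [Algebra.FiniteType K R] {P M : Ideal R} [P.IsPrime] [M.IsMaximal] (hPM : P ≤ M) :
    ringKrullDim (R ⧸ P) ≤ M.height := by
  have hker : RingHom.ker (Ideal.Quotient.mk P) ≤ M := by rwa [Ideal.mk_ker]
  have : (M.map (Ideal.Quotient.mk P)).IsMaximal :=
    Ideal.IsMaximal.map_of_surjective_of_ker_le Ideal.Quotient.mk_surjective hker
  rw [← height_eq_ringKrullDim_of_isMaximal K (M.map (Ideal.Quotient.mk P))]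
  have hle := height_le_height_comap_of_surjective Ideal.Quotient.mk_surjective
    (M.map (Ideal.Quotient.mk P))
  rw [Ideal.comap_map_of_surjective' _ Ideal.Quotient.mk_surjective, sup_eq_left.2 hker] at hle
  exact_mod_cast hle

end Height

section Localization

theorem ringKrullDim_le_of_isLocalization {R : Type*} [CommRing R] (S : Submonoid R) (B : Type*)
    [CommRing B] [Algebra R B] [IsLocalization S B] : ringKrullDim B ≤ ringKrullDim R := by
  rw [ringKrullDim_le_iff_height_le]
  intro Q _
  rw [← IsLocalization.height_under S Q]
  exact Ideal.height_le_ringKrullDim_of_isPrime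

variable {R : Type*} [CommRing R] {S : Submonoid R} {B : Type*} [CommRing B] [Algebra R B]
  [IsLocalization S B]

theorem ringKrullDim_lt_of_forall_isMaximal_not_disjoint [FiniteRingKrullDim R]
    (hS : ∀ M : Ideal R, M.IsMaximal → ¬ Disjoint (S : Set R) M) :
    ringKrullDim B < ringKrullDim R := by
  rcases subsingleton_or_nontrivial B with _ | _
  · rw [ringKrullDim_eq_bot_of_subsingleton]
    exact bot_lt_iff_ne_bot.2 ringKrullDim_ne_bot
  have : FiniteRingKrullDim B := finiteRingKrullDim_of_lt_top
    ((ringKrullDim_le_of_isLocalization S B).trans_lt ringKrullDim_lt_top)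
  obtain ⟨N, hN, hN_height⟩ := Ideal.exists_isMaximal_height (R := B)
  have hdisj : Disjoint (S : Set R) (N.under R) :=
    ((IsLocalization.isPrime_iff_isPrime_disjoint S B N).1 hN.isPrime).2
  obtain ⟨M, hM, hNM⟩ := (N.under R).exists_le_maximal Ideal.IsPrime.ne_top'
  have hlt : N.under R < M := hNM.lt_of_ne fun h ↦ hS M hM (h ▸ hdisj)
  calc ringKrullDim B = (N.under R).height := by rw [← hN_height, IsLocalization.height_under S N]
    _ < M.height := by exact_mod_cast Ideal.height_strict_mono_of_isPrime hlt
    _ ≤ ringKrullDim R := Ideal.height_le_ringKrullDim_of_isPrime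

theorem height_le_ringKrullDim_of_disjoint {P : Ideal R} [P.IsPrime]
    (hP : Disjoint (S : Set R) P) : P.height ≤ ringKrullDim B := by
  have := IsLocalization.isPrime_of_isPrime_disjoint S B P ‹_› hP
  rw [← IsLocalization.height_map_of_disjoint (S := B) S P hP]
  exact Ideal.height_le_ringKrullDim_of_isPrime

instance isLocalization_quotient_comap (I : Ideal B) :
    IsLocalization (Algebra.algebraMapSubmonoid (R ⧸ I.comap (algebraMap R B)) S) (B ⧸ I) :=
  IsLocalization.of_surjective S B (Ideal.Quotient.mk _) Ideal.Quotient.mk_surjective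
    (Ideal.Quotient.mk I) Ideal.Quotient.mk_surjective rfl
    (by simp [IsLocalization.map_under S B I])

theorem le_nonZeroDivisors_of_isLocalization_of_injective
    (hinj : Function.Injective (algebraMap R B)) : S ≤ nonZeroDivisors R := fun s hs ↦
  mem_nonZeroDivisors_of_injective hinj (IsLocalization.map_units B ⟨s, hs⟩).mem_nonZeroDivisors

theorem ringKrullDim_quotient_lt_of_forall_isMaximal_not_disjoint (hR : ringKrullDim R < ⊤)
    {I : Ideal B} (hI : I ≠ ⊤)
    (hS : ∀ M : Ideal R, M.IsMaximal → I.comap (algebraMap R B) ≤ M → ¬ Disjoint (S : Set R) M) :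
    ringKrullDim (B ⧸ I) < ringKrullDim (R ⧸ I.comap (algebraMap R B)) := by
  let J := I.comap (algebraMap R B)
  have : Nontrivial (R ⧸ J) := Ideal.Quotient.nontrivial_iff.2 (Ideal.comap_ne_top _ hI)
  have : FiniteRingKrullDim (R ⧸ J) := finiteRingKrullDim_of_lt_top
    ((ringKrullDim_quotient_le J).trans_lt hR)
  refine ringKrullDim_lt_of_forall_isMaximal_not_disjoint
    (S := Algebra.algebraMapSubmonoid (R ⧸ J) S) fun N hN hdisj ↦ ?_
  have hM : (N.comap (Ideal.Quotient.mk J)).IsMaximal :=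
    Ideal.comap_isMaximal_of_surjective _ Ideal.Quotient.mk_surjective
  refine hS _ hM ((Ideal.mk_ker (I := J)).ge.trans (Ideal.comap_mono bot_le)) ?_
  exact Set.disjoint_left.2 fun s hs hsN ↦ Set.disjoint_left.1 hdisj ⟨s, hs, rfl⟩ hsN

end Localization

section OneAdd

variable {R : Type*} [CommRing R] {S : Submonoid R} {𝔞 : Ideal R}

theorem exists_isMaximal_ge_disjoint_of_one_add (hS : ∀ f, f ∈ S ↔ f - 1 ∈ 𝔞) {I : Ideal R}
    (hI : Disjoint (S : Set R) I) :
    ∃ M : Ideal R, M.IsMaximal ∧ I ≤ M ∧ Disjoint (S : Set R) M := by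
  have hne : I ⊔ 𝔞 ≠ ⊤ := by
    intro htop
    obtain ⟨a, ha, b, hb, hab⟩ := Submodule.mem_sup.1 ((Ideal.eq_top_iff_one _).1 htop)
    refine Set.disjoint_left.1 hI ((hS a).2 ?_) ha
    simpa [← hab] using hb
  obtain ⟨M, hM, hle⟩ := Ideal.exists_le_maximal _ hne
  refine ⟨M, hM, le_sup_left.trans hle, Set.disjoint_left.2 fun s hs hsM ↦ ?_⟩
  refine hM.ne_top ((Ideal.eq_top_iff_one M).2 ?_)
  simpa using M.sub_mem hsM (hle (le_sup_right (a := I) ((hS s).1 hs)))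

theorem mem_algebraMapSubmonoid_quotient_iff_sub_one_mem (hS : ∀ f, f ∈ S ↔ f - 1 ∈ 𝔞)
    (J : Ideal R) (f : R ⧸ J) :
    f ∈ Algebra.algebraMapSubmonoid (R ⧸ J) S ↔ f - 1 ∈ 𝔞.map (Ideal.Quotient.mk J) := by
  rw [Ideal.mem_map_iff_of_surjective _ Ideal.Quotient.mk_surjective]
  constructor
  · rintro ⟨s, hs, rfl⟩
    exact ⟨s - 1, (hS s).1 hs, by simp⟩
  · rintro ⟨a, ha, haf⟩
    exact ⟨1 + a, (hS _).2 (by simpa using ha), by simp [haf]⟩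

variable {B : Type*} [CommRing B] [Algebra R B] [IsLocalization S B]

theorem ringKrullDim_eq_of_isLocalization_one_add (K : Type*) [Field K] [Algebra K R]
    [Algebra.FiniteType K R] (hS : ∀ f, f ∈ S ↔ f - 1 ∈ 𝔞)
    (hinj : Function.Injective (algebraMap R B)) : ringKrullDim B = ringKrullDim R := by
  refine le_antisymm (ringKrullDim_le_of_isLocalization S B)
    (ringKrullDim_le_of_forall_minimalPrimes fun P hP ↦ ?_)
  have := hP.isPrime
  have hPS : Disjoint (S : Set R) P :=
    (Ideal.disjoint_nonZeroDivisors_of_mem_minimalPrimes hP).symm.mono_left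
      (le_nonZeroDivisors_of_isLocalization_of_injective hinj)
  obtain ⟨M, hM, hPM, hMS⟩ := exists_isMaximal_ge_disjoint_of_one_add hS hPS
  calc ringKrullDim (R ⧸ P) ≤ M.height := ringKrullDim_quotient_le_height_of_isMaximal K hPM
    _ ≤ ringKrullDim B := height_le_ringKrullDim_of_disjoint hMS

theorem ringKrullDim_quotient_eq_of_isLocalization_one_add (K : Type*) [Field K] [Algebra K R]
    [Algebra.FiniteType K R] (hS : ∀ f, f ∈ S ↔ f - 1 ∈ 𝔞) (I : Ideal B) :
    ringKrullDim (B ⧸ I) = ringKrullDim (R ⧸ I.comap (algebraMap R B)) :=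
  ringKrullDim_eq_of_isLocalization_one_add K
    (mem_algebraMapSubmonoid_quotient_iff_sub_one_mem hS _) Ideal.quotientMap_injective

end OneAdd

section Nullstellensatz

theorem exists_one_sub_mul_aeval_mem_of_isMaximal (K : Type*) [Field K] {R : Type*} [CommRing R]
    [Algebra K R] [Algebra.FiniteType K R] (M : Ideal R) [M.IsMaximal] {x : R} (hx : x ∉ M) :
    ∃ q : Polynomial K, 1 - x * Polynomial.aeval x q ∈ M := by
  let _ : Field (R ⧸ M) := Ideal.Quotient.field M
  have : Module.Finite K (R ⧸ M) := finite_of_finite_type_of_isJacobsonRing _ _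
  let y : R ⧸ M := Ideal.Quotient.mkₐ K M x
  have hy : y ≠ 0 := fun h ↦ hx (Ideal.Quotient.eq_zero_iff_mem.1 h)
  have hinv : y⁻¹ ∈ Algebra.adjoin K {y} := Subalgebra.inv_mem_of_algebraic (Algebra.adjoin K {y})
    (x := ⟨y, Algebra.self_mem_adjoin_singleton K y⟩) (Algebra.IsAlgebraic.isAlgebraic y)
  rw [Algebra.adjoin_singleton_eq_range_aeval] at hinv
  obtain ⟨q, hq : Polynomial.aeval y q = y⁻¹⟩ := hinv
  refine ⟨q, Ideal.Quotient.eq_zero_iff_mem.1 ?_⟩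
  change Ideal.Quotient.mkₐ K M (1 - x * Polynomial.aeval x q) = 0
  rw [map_sub, map_one, map_mul, ← Polynomial.aeval_algHom_apply, hq, mul_inv_cancel₀ hy, sub_self]

end Nullstellensatz

section MonomialOrder

open MvPolynomial

variable {σ : Type*} {lt : (σ →₀ ℕ) → (σ →₀ ℕ) → Prop}

namespace IsSemigroupOrder

theorem irrefl (h : IsSemigroupOrder lt) (a : σ →₀ ℕ) : ¬ lt a a :=
  h.1.irrefl a

theorem trans (h : IsSemigroupOrder lt) {a b c : σ →₀ ℕ} (hab : lt a b) (hbc : lt b c) :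
    lt a c :=
  h.1.trans a b c hab hbc

theorem trichotomy (h : IsSemigroupOrder lt) (a b : σ →₀ ℕ) : lt a b ∨ a = b ∨ lt b a :=
  have := h.1
  trichotomous_of lt a b

theorem add_lt_add_right (h : IsSemigroupOrder lt) {a b : σ →₀ ℕ} (hab : lt a b) (c : σ →₀ ℕ) :
    lt (a + c) (b + c) := by
  simpa only [add_comm] using h.2 a b c hab

theorem add_lt_add (h : IsSemigroupOrder lt) {a b c d : σ →₀ ℕ} (hab : lt a b) (hcd : lt c d) :
    lt (a + c) (b + d) :=
  h.trans (h.add_lt_add_right hab c) (h.2 c d b hcd)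

theorem add_not_lt_zero (h : IsSemigroupOrder lt) {a b : σ →₀ ℕ} (ha : ¬ lt a 0)
    (hb : ¬ lt b 0) : ¬ lt (a + b) 0 := by
  intro hab
  rcases h.trichotomy b 0 with hb' | rfl | hb'
  · exact hb hb'
  · exact ha (by simpa using hab)
  · exact ha (h.trans (by simpa using h.2 0 b a hb') hab)

theorem nsmul_not_lt_zero (h : IsSemigroupOrder lt) {a : σ →₀ ℕ} (ha : ¬ lt a 0) (k : ℕ) :
    ¬ lt (k • a) 0 := by
  induction k with
  | zero => simpa using h.irrefl 0
  | succ k ih => simpa only [succ_nsmul] using h.add_not_lt_zero ih ha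

theorem succ_nsmul_lt_zero (h : IsSemigroupOrder lt) {a : σ →₀ ℕ} (ha : lt a 0) (k : ℕ) :
    lt ((k + 1) • a) 0 := by
  induction k with
  | zero => simpa using ha
  | succ k ih => simpa only [succ_nsmul _ (k + 1), add_zero] using h.add_lt_add ih ha

theorem not_lt_zero_of_forall_not_isLocalVar (h : IsSemigroupOrder lt) {m : σ →₀ ℕ}
    (hm : ∀ i, m i ≠ 0 → ¬ IsLocalVar lt i) : ¬ lt m 0 := by
  induction m using Finsupp.induction_linear with
  | zero => exact h.irrefl 0
  | add f g hf hg =>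
    exact h.add_not_lt_zero (hf fun i hi ↦ hm i (by simp [hi])) (hg fun i hi ↦ hm i (by simp [hi]))
  | single i k =>
    rcases eq_or_ne k 0 with rfl | hk
    · simpa using h.irrefl 0
    · simpa using h.nsmul_not_lt_zero (hm i (by simpa using hk)) k

theorem exists_isLeadingMonomial {R : Type*} [CommSemiring R] (h : IsSemigroupOrder lt)
    {g : MvPolynomial σ R} (hg : g ≠ 0) : ∃ m, IsLeadingMonomial lt g m := by
  have := h.1
  let _ : LinearOrder (σ →₀ ℕ) := linearOrderOfSTO lt
  obtain ⟨m, hm, hmax⟩ := g.support.exists_max_image id (support_nonempty.2 hg)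
  exact ⟨m, hm, fun m' hm' hne ↦ Or.resolve_left (hmax m' hm') hne⟩

theorem mem_SDen_iff {R : Type*} [CommRing R] (h : IsSemigroupOrder lt) {f : MvPolynomial σ R} :
    f ∈ SDen R lt ↔ ∀ m ∈ (f - 1).support, lt m 0 := by
  constructor
  · rintro ⟨g, rfl, rfl | ⟨m₀, ⟨-, hmax⟩, hm₀⟩⟩ m hm
    · simp at hm
    · rw [add_sub_cancel_left] at hm
      rcases eq_or_ne m m₀ with rfl | hne
      · exact hm₀
      · exact h.trans (hmax m hm hne) hm₀
  · intro hf
    refine ⟨f - 1, (add_sub_cancel 1 f).symm, or_iff_not_imp_left.2 fun hne ↦ ?_⟩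
    obtain ⟨m, hm⟩ := h.exists_isLeadingMonomial hne
    exact ⟨m, hm, hf m hm.1⟩

end IsSemigroupOrder

namespace IsLeadingMonomial

variable {R : Type*} [CommSemiring R] {f g : MvPolynomial σ R} {a b : σ →₀ ℕ}

theorem unique (h : IsSemigroupOrder lt) (ha : IsLeadingMonomial lt f a)
    (hb : IsLeadingMonomial lt f b) : a = b := by
  by_contra hne
  exact h.irrefl a (h.trans (hb.2 a ha.1 hne) (ha.2 b hb.1 (Ne.symm hne)))

theorem add_lt_add_of_mem_support (h : IsSemigroupOrder lt) (hf : IsLeadingMonomial lt f a)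
    (hg : IsLeadingMonomial lt g b) {c d : σ →₀ ℕ} (hc : c ∈ f.support) (hd : d ∈ g.support)
    (hne : (c, d) ≠ (a, b)) : lt (c + d) (a + b) := by
  rcases eq_or_ne c a with rfl | hca
  · exact h.2 d b c (hg.2 d hd fun hdb ↦ hne (by rw [hdb]))
  · rcases eq_or_ne d b with rfl | hdb
    · exact h.add_lt_add_right (hf.2 c hc hca) d
    · exact h.add_lt_add (hf.2 c hc hca) (hg.2 d hd hdb)

theorem mul [NoZeroDivisors R] (h : IsSemigroupOrder lt) (hf : IsLeadingMonomial lt f a)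
    (hg : IsLeadingMonomial lt g b) : IsLeadingMonomial lt (f * g) (a + b) := by
  have hunique : UniqueAdd f.support g.support a b := by
    intro c d hc hd hcd
    by_contra hne
    refine h.irrefl (a + b) ?_
    simpa only [hcd] using hf.add_lt_add_of_mem_support h hg hc hd (by simpa using hne)
  have hcoeff : coeff (a + b) (f * g) = coeff a f * coeff b g :=
    AddMonoidAlgebra.coeff_mul_add_of_uniqueAdd hunique
  constructor
  · rw [mem_support_iff, hcoeff]
    exact mul_ne_zero (mem_support_iff.1 hf.1) (mem_support_iff.1 hg.1)
  · intro m hm hne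
    obtain ⟨c, hc, d, hd, rfl⟩ := Finset.mem_add.1 (support_mul f g hm)
    exact hf.add_lt_add_of_mem_support h hg hc hd fun hcd ↦ hne (by simp_all)

end IsLeadingMonomial

theorem isLeadingMonomial_zero_of_mem_SDen {R : Type*} [CommRing R] [Nontrivial R]
    (h : IsSemigroupOrder lt) {f : MvPolynomial σ R} (hf : f ∈ SDen R lt) :
    IsLeadingMonomial lt f 0 := by
  rw [h.mem_SDen_iff] at hf
  constructor
  · have hzero : coeff 0 (f - 1) = 0 :=
      notMem_support_iff.1 fun hmem ↦ h.irrefl 0 (hf 0 hmem)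
    have hone : coeff 0 f = 1 := by simpa [sub_eq_zero] using hzero
    simp [hone]
  · intro m hm hne
    refine hf m ?_
    simpa [coeff_one, hne.symm] using hm

theorem isLeadingMonomial_one_sub_monomial {R : Type*} [CommRing R] [Nontrivial R]
    (h : IsSemigroupOrder lt) {m : σ →₀ ℕ} (hm : lt 0 m) :
    IsLeadingMonomial lt (1 - monomial m (1 : R)) m := by
  have hne : 0 ≠ m := fun h0 ↦ h.irrefl 0 (by rwa [← h0] at hm)
  constructor
  · simp [coeff_one, hne]
  · intro m' hm' hne'
    have : m' = 0 := by
      by_contra h0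
      simp [coeff_one, coeff_monomial, Ne.symm h0, Ne.symm hne'] at hm'
    rwa [this]

theorem disjoint_SDen_span_singleton {R : Type*} [CommRing R] [IsDomain R]
    (h : IsSemigroupOrder lt) {g : MvPolynomial σ R} {m : σ →₀ ℕ} (hg : IsLeadingMonomial lt g m)
    (hm : m ≠ 0) : Disjoint (SDen R lt) (Ideal.span {g} : Ideal (MvPolynomial σ R)) := by
  refine Set.disjoint_left.2 fun s hs hsg ↦ hm ?_
  obtain ⟨f, rfl⟩ := Ideal.mem_span_singleton.1 hsg
  have hlead := isLeadingMonomial_zero_of_mem_SDen h hs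
  have hf : f ≠ 0 := by
    rintro rfl
    simpa using hlead.1
  obtain ⟨μ, hμ⟩ := h.exists_isLeadingMonomial hf
  exact (add_eq_zero.1 ((hg.mul h hμ).unique h hlead)).1

theorem exists_eq_single_succ_of_mem_support_X_mul_aeval_X {R : Type*} [CommSemiring R] {i : σ}
    {q : Polynomial R} {m : σ →₀ ℕ}
    (hm : m ∈ (X i * Polynomial.aeval (X i : MvPolynomial σ R) q).support) :
    ∃ k, m = Finsupp.single i (k + 1) := by
  have hsum : X i * Polynomial.aeval (X i : MvPolynomial σ R) q =
      ∑ k ∈ Finset.range (q.natDegree + 1), monomial (Finsupp.single i (k + 1)) (q.coeff k) := by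
    rw [Polynomial.aeval_eq_sum_range, Finset.mul_sum]
    refine Finset.sum_congr rfl fun k _ ↦ ?_
    rw [mul_smul_comm, ← pow_succ', X_pow_eq_monomial, smul_monomial, smul_eq_mul, mul_one]
  rw [hsum] at hm
  obtain ⟨k, -, hk⟩ := Finset.mem_biUnion.1 (support_sum hm)
  exact ⟨k, Finset.mem_singleton.1 (support_monomial_subset hk)⟩

theorem one_sub_X_mul_aeval_X_mem_SDen {R : Type*} [CommRing R] (h : IsSemigroupOrder lt) {i : σ}
    (hi : IsLocalVar lt i) (q : Polynomial R) :
    1 - X i * Polynomial.aeval (X i) q ∈ SDen R lt := by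
  rw [h.mem_SDen_iff]
  intro m hm
  rw [sub_sub_cancel_left, support_neg] at hm
  obtain ⟨k, rfl⟩ := exists_eq_single_succ_of_mem_support_X_mul_aeval_X hm
  simpa using h.succ_nsmul_lt_zero hi k

theorem X_notMem_of_one_sub_monomial_mem {R : Type*} [CommRing R] {I : Ideal (MvPolynomial σ R)}
    (hI : I ≠ ⊤) {m : σ →₀ ℕ} (hm : 1 - monomial m (1 : R) ∈ I) {i : σ} (hi : m i ≠ 0) :
    X i ∉ I := by
  intro hX
  have hmonomial : monomial m (1 : R) ∈ I := I.mem_of_dvd (X_dvd_monomial.2 (Or.inr hi)) hX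
  exact hI ((Ideal.eq_top_iff_one I).2 (by simpa using I.add_mem hm hmonomial))

theorem not_disjoint_SDen_of_X_notMem {K : Type*} [Field K] [Finite σ] (h : IsSemigroupOrder lt)
    {i : σ} (hi : IsLocalVar lt i) {M : Ideal (MvPolynomial σ K)} [M.IsMaximal] (hX : X i ∉ M) :
    ¬ Disjoint (SDen K lt) (M : Set (MvPolynomial σ K)) := by
  obtain ⟨q, hq⟩ := exists_one_sub_mul_aeval_mem_of_isMaximal K M hX
  exact Set.not_disjoint_iff.2 ⟨_, one_sub_X_mul_aeval_X_mem_SDen h hi q, hq⟩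

/-- The ideal of `R[σ]` generated by the variables that are local for `lt`. For a control order
the denominators `SDen R lt` are exactly `1 + localVarIdeal R lt`. -/
def localVarIdeal (R : Type*) [CommSemiring R] (lt : (σ →₀ ℕ) → (σ →₀ ℕ) → Prop) :
    Ideal (MvPolynomial σ R) :=
  Ideal.span (X '' {i | IsLocalVar lt i})

namespace IsControlOrder

theorem lt_zero_iff_s10 (hc : IsControlOrder lt) {m : σ →₀ ℕ} :
    lt m 0 ↔ ∃ i, IsLocalVar lt i ∧ m i ≠ 0 := by
  refine ⟨fun hm ↦ ?_, hc.2 m⟩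
  by_contra! hcon
  exact hc.1.not_lt_zero_of_forall_not_isLocalVar (fun i hi hl ↦ hi (hcon i hl)) hm

theorem mem_SDen_iff_sub_one_mem {R : Type*} [CommRing R] (hc : IsControlOrder lt)
    (f : MvPolynomial σ R) : f ∈ SDen R lt ↔ f - 1 ∈ localVarIdeal R lt := by
  simp only [hc.1.mem_SDen_iff, localVarIdeal, mem_ideal_span_X_image, hc.lt_zero_iff_s10,
    Set.mem_ofPred_eq]

end IsControlOrder

theorem IsSemigroupOrder.exists_lt_of_not_isControlOrder (h : IsSemigroupOrder lt)
    (hc : ¬ IsControlOrder lt) : ∃ i m, IsLocalVar lt i ∧ m i ≠ 0 ∧ lt 0 m := by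
  simp only [IsControlOrder, h, true_and, not_forall] at hc
  obtain ⟨m, ⟨i, hi, hmi⟩, hm⟩ := hc
  refine ⟨i, m, hi, hmi, ((h.trichotomy m 0).resolve_left hm).resolve_left ?_⟩
  rintro rfl
  exact hmi rfl

end MonomialOrder

section KrullDimension

variable {σ : Type*} [Finite σ] {lt : (σ →₀ ℕ) → (σ →₀ ℕ) → Prop} {K : Type*} [Field K]
  {S : Submonoid (MvPolynomial σ K)}

theorem IsControlOrder.ringKrullDim_quotient_eq (hc : IsControlOrder lt)
    (hS : (S : Set (MvPolynomial σ K)) = SDen K lt) {B : Type*} [CommRing B]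
    [Algebra (MvPolynomial σ K) B] [IsLocalization S B] (I : Ideal B) :
    ringKrullDim (B ⧸ I) =
      ringKrullDim (MvPolynomial σ K ⧸ I.comap (algebraMap (MvPolynomial σ K) B)) := by
  refine ringKrullDim_quotient_eq_of_isLocalization_one_add (S := S)
    (𝔞 := localVarIdeal K lt) K (fun f ↦ ?_) I
  rw [← hc.mem_SDen_iff_sub_one_mem, ← hS, SetLike.mem_coe]

theorem IsSemigroupOrder.exists_ringKrullDim_quotient_map_lt (h : IsSemigroupOrder lt)
    (hc : ¬ IsControlOrder lt) (hS : (S : Set (MvPolynomial σ K)) = SDen K lt)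
    (B : Type*) [CommRing B] [Algebra (MvPolynomial σ K) B] [IsLocalization S B] :
    ∃ I : Ideal (MvPolynomial σ K),
      ringKrullDim (B ⧸ I.map (algebraMap (MvPolynomial σ K) B)) <
        ringKrullDim (MvPolynomial σ K ⧸
          (I.map (algebraMap (MvPolynomial σ K) B)).comap (algebraMap (MvPolynomial σ K) B)) := by
  obtain ⟨i, m, hi, hmi, hm⟩ := h.exists_lt_of_not_isControlOrder hc
  have hm0 : m ≠ 0 := fun h0 ↦ hmi (by simp [h0])
  let I : Ideal (MvPolynomial σ K) := Ideal.span {1 - MvPolynomial.monomial m (1 : K)}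
  have hIS : Disjoint (S : Set (MvPolynomial σ K)) I :=
    hS ▸ disjoint_SDen_span_singleton h (isLeadingMonomial_one_sub_monomial h hm) hm0
  refine ⟨I, ringKrullDim_quotient_lt_of_forall_isMaximal_not_disjoint (S := S) ?_
    ((IsLocalization.map_algebraMap_ne_top_iff_disjoint S B I).2 hIS) fun M hM hIM ↦ ?_⟩
  · have hdim : ringKrullDim (MvPolynomial σ K) = Nat.card σ := by simp
    rw [hdim]
    exact WithBot.coe_lt_coe.2 (ENat.natCast_lt_top _)
  · have hmem : 1 - MvPolynomial.monomial m (1 : K) ∈ M :=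
      hIM (Ideal.le_comap_map (Ideal.mem_span_singleton_self _))
    rw [hS]
    exact not_disjoint_SDen_of_X_notMem h hi (X_notMem_of_one_sub_monomial_mem hM.ne_top hmem hmi)

end KrullDimension

/-- `dim(S⁻¹A / S⁻¹I) = dim(A / (S⁻¹I)^c)` holds for every ideal `I ⊆ A`
iff the semigroup order `lt` is a control order. -/
theorem stmt_10 {K : Type*} [Field K] {n : ℕ}
    (lt : (Fin n →₀ ℕ) → (Fin n →₀ ℕ) → Prop) (hsem : IsSemigroupOrder lt)
    (S : Submonoid (MvPolynomial (Fin n) K))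
    (hS : (S : Set (MvPolynomial (Fin n) K)) = SDen K lt) :
    (∀ I : Ideal (MvPolynomial (Fin n) K),
        ringKrullDim
            (Localization S ⧸ I.map (algebraMap (MvPolynomial (Fin n) K) (Localization S))) =
          ringKrullDim
            (MvPolynomial (Fin n) K ⧸
              (I.map (algebraMap (MvPolynomial (Fin n) K) (Localization S))).comap
                (algebraMap (MvPolynomial (Fin n) K) (Localization S)))) ↔
      IsControlOrder lt := by
  constructor
  · intro hdim
    by_contra hc
    obtain ⟨I, hI⟩ := hsem.exists_ringKrullDim_quotient_map_lt hc hS (Localization S)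
    exact hI.ne (hdim I)
  · intro hc I
    exact hc.ringKrullDim_quotient_eq hS _
end
end
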